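/- Every odd Niemeier lattice N has exactly two even neighbors, and both of them contain the even sublattice N₀ = {x ∈ N : (x,x) even}, which has index 2 in N. -/

import Mathlib

open scoped BigOperators

namespace Niemeier

variable {V : Type*} [AddCommGroup V] [Module ℚ V]
variable {W : Type*} [AddCommGroup W] [Module ℚ W]

/-- The dual lattice of a `ℤ`-submodule `L` of a rational vector space `V` with respect to the
bilinear form `B`: all vectors pairing integrally with every element of `L`. -/
def dualLattice (B : V →ₗ[ℚ] V →ₗ[ℚ] ℚ) (L : Submodule ℤ V) : Submodule ℤ V where
  carrier := {x | ∀ y ∈ L, ∃ n : ℤ, B x y = n}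
  zero_mem' := by
    intro y hy
    exact ⟨0, by simp⟩
  add_mem' := by
    intro a b ha hb y hy
    obtain ⟨m, hm⟩ := ha y hy
    obtain ⟨k, hk⟩ := hb y hy
    exact ⟨m + k, by push_cast [map_add, LinearMap.add_apply, hm, hk]; rfl⟩
  smul_mem' := by
    intro c x hx y hy
    obtain ⟨m, hm⟩ := hx y hy
    refine ⟨c * m, ?_⟩
    have h1 : B (c • x) y = c • (B x y) := by
      rw [map_zsmul]; rfl
    rw [h1, hm, zsmul_eq_mul]
    push_cast
    ring

/-- `B` is a symmetric positive-definite bilinear form. -/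
def IsPosDefSymm (B : V →ₗ[ℚ] V →ₗ[ℚ] ℚ) : Prop :=
  (∀ x y, B x y = B y x) ∧ ∀ x : V, x ≠ 0 → 0 < B x x

/-- `L` is a (full-rank, integral) lattice in `V` with respect to `B`. -/
structure IsIntegralLattice (B : V →ₗ[ℚ] V →ₗ[ℚ] ℚ) (L : Submodule ℤ V) : Prop where
  fg : L.FG
  spans : Submodule.span ℚ (L : Set V) = ⊤
  integral : L ≤ dualLattice B L

/-- `L` is unimodular: it coincides with its dual lattice. -/
def IsUnimodular (B : V →ₗ[ℚ] V →ₗ[ℚ] ℚ) (L : Submodule ℤ V) : Prop :=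
  L = dualLattice B L

/-- `L` is an even lattice: all norms are even integers. -/
def IsEvenLat (B : V →ₗ[ℚ] V →ₗ[ℚ] ℚ) (L : Submodule ℤ V) : Prop :=
  ∀ v ∈ L, ∃ n : ℤ, B v v = 2 * n

/-- `L` is an odd lattice: some vector has odd (integer) norm. -/
def IsOddLat (B : V →ₗ[ℚ] V →ₗ[ℚ] ℚ) (L : Submodule ℤ V) : Prop :=
  ∃ v ∈ L, ∃ n : ℤ, B v v = 2 * n + 1

/-- An odd Niemeier lattice: an odd positive-definite unimodular integral lattice of rank 24
(positive-definiteness of `B` is a separate hypothesis). -/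
def IsOddNiemeier (B : V →ₗ[ℚ] V →ₗ[ℚ] ℚ) (N : Submodule ℤ V) : Prop :=
  IsIntegralLattice B N ∧ IsUnimodular B N ∧ IsOddLat B N ∧ Module.finrank ℚ V = 24

/-- `D` is a subgroup of index two in `L`. -/
def IndexTwo (D L : Submodule ℤ V) : Prop :=
  D ≤ L ∧ ∃ a ∈ L, a ∉ D ∧ ∀ x ∈ L, x ∈ D ∨ x - a ∈ D

/-- Two lattices are neighbors if their intersection has index two in each of them. -/
def Neighbors (L M : Submodule ℤ V) : Prop :=
  IndexTwo (L ⊓ M) L ∧ IndexTwo (L ⊓ M) M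

/-- `E` is an even neighbor of the odd Niemeier lattice `N`: an even unimodular integral
lattice (in the same ambient space) which is a neighbor of `N`. -/
def IsEvenNeighbor (B : V →ₗ[ℚ] V →ₗ[ℚ] ℚ) (N E : Submodule ℤ V) : Prop :=
  IsIntegralLattice B E ∧ IsUnimodular B E ∧ IsEvenLat B E ∧ Neighbors N E

/-- The minimum norm of `L` equals `m`. -/
def HasMinNorm (B : V →ₗ[ℚ] V →ₗ[ℚ] ℚ) (L : Submodule ℤ V) (m : ℚ) : Prop :=
  (∃ v ∈ L, v ≠ 0 ∧ B v v = m) ∧ ∀ v ∈ L, v ≠ 0 → m ≤ B v v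

/-- `N` contains a sublattice isometric to the rank-6 lattice `L⁺`, i.e. there are vectors
`h, a 0, …, a 4` in `N` realizing the Gram matrix of `L⁺`. -/
def ContainsLPlus (B : V →ₗ[ℚ] V →ₗ[ℚ] ℚ) (N : Submodule ℤ V) : Prop :=
  ∃ h ∈ N, ∃ a : Fin 5 → V, (∀ i, a i ∈ N) ∧
    B h h = 2 ∧ (∀ i, B h (a i) = 1) ∧ (∀ i, B (a i) (a i) = 3) ∧
    ∀ i j, i ≠ j → B (a i) (a j) = 0

/-- Two lattices (in possibly different ambient spaces, with forms `B` and `C`) are isometric: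
there is a `ℤ`-linear bijection between them preserving the bilinear forms. -/
def LatticeIsometric (B : V → V → ℚ) (C : W → W → ℚ)
    (L : Submodule ℤ V) (M : Submodule ℤ W) : Prop :=
  ∃ f : L ≃ₗ[ℤ] M, ∀ x y : L, C (f x) (f y) = B x y

/-- The standard dot product on `ℚⁿ`. -/
def stdDot (n : ℕ) : (Fin n → ℚ) → (Fin n → ℚ) → ℚ := fun x y => ∑ i, x i * y i

/-- The orthogonal sum of two bilinear forms. -/
def prodForm (B : V → V → ℚ) (C : W → W → ℚ) : V × W → V × W → ℚ :=
  fun p q => B p.1 q.1 + C p.2 q.2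

/-- A vector in `ℚⁿ` has integer coordinates. -/
def IsIntVec {n : ℕ} (x : Fin n → ℚ) : Prop := ∀ i, ∃ m : ℤ, x i = m

/-- The root lattice `Dₙ = {x ∈ ℤⁿ : ∑ xᵢ even}`. -/
def latD (n : ℕ) : Submodule ℤ (Fin n → ℚ) where
  carrier := {x | IsIntVec x ∧ ∃ k : ℤ, ∑ i, x i = 2 * k}
  zero_mem' := by
    refine ⟨fun i => ⟨0, by simp⟩, 0, by simp⟩
  add_mem' := by
    rintro a b ⟨ha, k₁, hk₁⟩ ⟨hb, k₂, hk₂⟩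
    refine ⟨fun i => ?_, k₁ + k₂, ?_⟩
    · obtain ⟨m, hm⟩ := ha i
      obtain ⟨m', hm'⟩ := hb i
      exact ⟨m + m', by simp [Pi.add_apply, hm, hm']⟩
    · simp only [Pi.add_apply, Finset.sum_add_distrib, hk₁, hk₂]
      push_cast
      ring
  smul_mem' := by
    rintro c x ⟨hx, k, hk⟩
    refine ⟨fun i => ?_, c * k, ?_⟩
    · obtain ⟨m, hm⟩ := hx i
      exact ⟨c * m, by simp [Pi.smul_apply, hm, zsmul_eq_mul]⟩
    · have : ∑ i, (c • x) i = c • ∑ i, x i := by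
        simp [Pi.smul_apply, Finset.smul_sum]
      rw [this, hk, zsmul_eq_mul]
      push_cast
      ring

/-- The root lattice `Aₙ = {x ∈ ℤⁿ⁺¹ : ∑ xᵢ = 0}`. -/
def latA (n : ℕ) : Submodule ℤ (Fin (n + 1) → ℚ) where
  carrier := {x | IsIntVec x ∧ ∑ i, x i = 0}
  zero_mem' := ⟨fun i => ⟨0, by simp⟩, by simp⟩
  add_mem' := by
    rintro a b ⟨ha, hka⟩ ⟨hb, hkb⟩
    refine ⟨fun i => ?_, ?_⟩
    · obtain ⟨m, hm⟩ := ha i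
      obtain ⟨m', hm'⟩ := hb i
      exact ⟨m + m', by simp [Pi.add_apply, hm, hm']⟩
    · simp [Pi.add_apply, Finset.sum_add_distrib, hka, hkb]
  smul_mem' := by
    rintro c x ⟨hx, hk⟩
    refine ⟨fun i => ?_, ?_⟩
    · obtain ⟨m, hm⟩ := hx i
      exact ⟨c * m, by simp [Pi.smul_apply, hm, zsmul_eq_mul]⟩
    · have : ∑ i, (c • x) i = c • ∑ i, x i := by
        simp [Pi.smul_apply, Finset.smul_sum]
      rw [this, hk, smul_zero]

/-- The root lattice `E₈ = D₈ + ℤ·(½,…,½)`. -/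
def latE8 : Submodule ℤ (Fin 8 → ℚ) :=
  latD 8 ⊔ Submodule.span ℤ {fun _ => (1 : ℚ) / 2}

/-- The root sublattice of `E`: the `ℤ`-span of its vectors of norm 2. -/
def rootSublattice (B : V →ₗ[ℚ] V →ₗ[ℚ] ℚ) (E : Submodule ℤ V) : Submodule ℤ V :=
  Submodule.span ℤ {v : V | v ∈ E ∧ B v v = 2}

/-- The set of even-norm vectors of `N` (the even sublattice, as a set). -/
def evenSet (B : V →ₗ[ℚ] V →ₗ[ℚ] ℚ) (N : Submodule ℤ V) : Set V :=
  {x | x ∈ N ∧ ∃ n : ℤ, B x x = 2 * n}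

/-- The unordered pair of root sublattices of `E₁` and `E₂` is isometric to the pair
`(M₁, M₂)`. -/
def RootPairIso {W₁ W₂ : Type*} [AddCommGroup W₁] [Module ℚ W₁]
    [AddCommGroup W₂] [Module ℚ W₂]
    (B : V →ₗ[ℚ] V →ₗ[ℚ] ℚ) (E₁ E₂ : Submodule ℤ V)
    (C₁ : W₁ → W₁ → ℚ) (M₁ : Submodule ℤ W₁)
    (C₂ : W₂ → W₂ → ℚ) (M₂ : Submodule ℤ W₂) : Prop :=
  (LatticeIsometric (fun x y => B x y) C₁ (rootSublattice B E₁) M₁ ∧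
    LatticeIsometric (fun x y => B x y) C₂ (rootSublattice B E₂) M₂) ∨
  (LatticeIsometric (fun x y => B x y) C₂ (rootSublattice B E₁) M₂ ∧
    LatticeIsometric (fun x y => B x y) C₁ (rootSublattice B E₂) M₁)

/-- The unordered pair of root sublattices of `E₁`, `E₂` is one of the four exceptional pairs
`{E₈³, D₈³}`, `{D₁₆⊕E₈, A₁₅⊕D₉}`, `{D₁₂², A₁₂²}`, `{D₂₄, A₂₄}`. -/
def IsExceptionalPair (B : V →ₗ[ℚ] V →ₗ[ℚ] ℚ) (E₁ E₂ : Submodule ℤ V) : Prop :=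
  RootPairIso B E₁ E₂
    (prodForm (stdDot 8) (prodForm (stdDot 8) (stdDot 8))) (latE8.prod (latE8.prod latE8))
    (prodForm (stdDot 8) (prodForm (stdDot 8) (stdDot 8))) ((latD 8).prod ((latD 8).prod (latD 8))) ∨
  RootPairIso B E₁ E₂
    (prodForm (stdDot 16) (stdDot 8)) ((latD 16).prod latE8)
    (prodForm (stdDot 16) (stdDot 9)) ((latA 15).prod (latD 9)) ∨
  RootPairIso B E₁ E₂
    (prodForm (stdDot 12) (stdDot 12)) ((latD 12).prod (latD 12))
    (prodForm (stdDot 13) (stdDot 13)) ((latA 12).prod (latA 12)) ∨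
  RootPairIso B E₁ E₂
    (stdDot 24) (latD 24)
    (stdDot 25) (latA 24)

/-!
The shadow of `N` is the set of halves of its characteristic vectors; it is a coset of `N`, and
`N₀* = N ∪ shadow`. An even neighbor of `N` meets `N` exactly in `N₀`, so it lies in `N₀*`
and has the form `N₀ + ℤ s` with `s` in the shadow. Conversely `N₀ + ℤ s` is an even neighbor as
soon as `(s, s)` is even. As `N₀` has index two in `N`, the shadow consists of two cosets of `N₀`,
one for each even neighbor.

That `(s, s)` is even when `8 ∣ rank N` is van der Blij's congruence `(s, s) ≡ rank N / 4 mod 2`.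
Choose an orthogonal basis of the ambient space made of vectors `eᵢ ∈ N` of even norms `aᵢ`, let
`Λ = ⨁ ℤ eᵢ`, and evaluate the Gauss sum `∑ exp (π i (x, x))` over `Λ* / Λ = ∏ ℤ / aᵢ` twice.
It factors over the basis, and the modularity of the theta function gives `√aᵢ exp (π i / 4)` for
the `i`-th factor. Averaging over `N / Λ` instead kills every coset of `N` except the shadow, on
which the summand is constant, so the sum is a nonnegative multiple of `exp (π i (s, s))`.
-/

section GaussSum

open Complex Filter Topology HurwitzZeta

/-- The additive character `x ↦ exp (π i x)` of `ℚ`; its kernel consists of the even integers. -/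
noncomputable def expPiI (x : ℚ) : ℂ := cexp (Real.pi * I * x)

theorem expPiI_add (x y : ℚ) : expPiI (x + y) = expPiI x * expPiI y := by
  rw [expPiI, expPiI, expPiI, ← Complex.exp_add, Rat.cast_add, mul_add]

theorem expPiI_sum {ι : Type*} (s : Finset ι) (f : ι → ℚ) :
    expPiI (∑ i ∈ s, f i) = ∏ i ∈ s, expPiI (f i) := by
  simp only [expPiI, Rat.cast_sum, Finset.mul_sum, Complex.exp_sum]

theorem expPiI_ne_zero (x : ℚ) : expPiI x ≠ 0 := Complex.exp_ne_zero _

theorem norm_expPiI (x : ℚ) : ‖expPiI x‖ = 1 := by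
  rw [expPiI, mul_right_comm]
  exact_mod_cast norm_exp_ofReal_mul_I (Real.pi * x)

theorem expPiI_eq_expPiI_iff {x y : ℚ} : expPiI x = expPiI y ↔ ∃ n : ℤ, x = y + 2 * n := by
  have hpi : (Real.pi : ℂ) * I ≠ 0 := mul_ne_zero (ofReal_ne_zero.mpr Real.pi_ne_zero) I_ne_zero
  rw [expPiI, expPiI, Complex.exp_eq_exp_iff_exists_int]
  refine exists_congr fun n ↦ ?_
  rw [show (Real.pi * I * y + n * (2 * Real.pi * I) : ℂ) = Real.pi * I * (y + 2 * n) by ring,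
    mul_right_inj' hpi]
  exact_mod_cast Iff.rfl

theorem jacobiTheta_eq_inv_mul_jacobiTheta_neg_one_div (τ : ℂ) :
    jacobiTheta τ = ((-I * τ) ^ (1 / 2 : ℂ))⁻¹ * jacobiTheta (-1 / τ) := by
  rw [jacobiTheta_eq_jacobiTheta₂, jacobiTheta₂_functional_equation, jacobiTheta_eq_jacobiTheta₂]
  simp

theorem jacobiTheta_add_natCast_of_even {a : ℕ} (ha : Even a) (τ : ℂ) :
    jacobiTheta (τ + a) = jacobiTheta τ := by
  obtain ⟨b, rfl⟩ := ha
  have hperiodic : Function.Periodic jacobiTheta 2 := fun z ↦ by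
    rw [add_comm, jacobiTheta_two_add]
  simpa [mul_two] using hperiodic.nat_mul b τ

theorem mul_cpow_of_arg_add_arg_mem {x y : ℂ} (hx : x ≠ 0) (hy : y ≠ 0)
    (h : arg x + arg y ∈ Set.Ioc (-Real.pi) Real.pi) (c : ℂ) : (x * y) ^ c = x ^ c * y ^ c := by
  rw [cpow_def_of_ne_zero (mul_ne_zero hx hy), cpow_def_of_ne_zero hx, cpow_def_of_ne_zero hy,
    Complex.log_mul hx hy h, add_mul, Complex.exp_add]

theorem ofReal_mul_cpow {r : ℝ} (hr : 0 < r) {z : ℂ} (hz : z ≠ 0) (c : ℂ) :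
    (r * z) ^ c = (r : ℂ) ^ c * z ^ c :=
  mul_cpow_of_arg_add_arg_mem (ofReal_ne_zero.mpr hr.ne') hz
    (by rw [arg_ofReal_of_nonneg hr.le, zero_add]; exact arg_mem_Ioc z) c

theorem neg_I_cpow_half : (-I) ^ (1 / 2 : ℂ) = (expPiI (1 / 4))⁻¹ := by
  rw [cpow_def_of_ne_zero (neg_ne_zero.mpr I_ne_zero), log_neg_I, expPiI, ← Complex.exp_neg]
  congr 1
  push_cast
  ring

theorem neg_I_mul_cpow_half {τ : ℂ} (hre : 0 < τ.re) :
    (-I * τ) ^ (1 / 2 : ℂ) = (expPiI (1 / 4))⁻¹ * τ ^ (1 / 2 : ℂ) := by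
  have hτ : τ ≠ 0 := fun h ↦ by simp [h] at hre
  have harg := abs_lt.mp (abs_arg_lt_pi_div_two_iff.mpr (Or.inl hre))
  rw [mul_cpow_of_arg_add_arg_mem (neg_ne_zero.mpr I_ne_zero) hτ _, neg_I_cpow_half]
  rw [arg_neg_I]
  exact ⟨by linarith, by linarith [Real.pi_pos]⟩

-- Two applications of `τ ↦ -1 / τ`, separated by the translation by `a`.
theorem jacobiTheta_eq_of_mul_sub_one_eq {a : ℕ} (ha : Even a) {r : ℝ} (hr : 0 < r) {τ : ℂ}
    (hre : 0 < τ.re) (h : r * (a * τ - 1) = I) :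
    jacobiTheta τ = √r * expPiI (1 / 4) * jacobiTheta (I * r * τ) := by
  have hr' : (r : ℂ) ≠ 0 := ofReal_ne_zero.mpr hr.ne'
  have hτ : τ ≠ 0 := fun h ↦ by simp [h] at hre
  have hτ' : τ ^ (1 / 2 : ℂ) ≠ 0 := by simp [cpow_eq_zero_iff, hτ]
  have hsqrt : ((√r : ℝ) : ℂ) = (r : ℂ) ^ (1 / 2 : ℂ) := by
    rw [Real.sqrt_eq_rpow, ofReal_cpow hr.le]
    norm_num
  have harg : (r * τ).arg ≠ Real.pi := by
    rw [arg_real_mul τ hr]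
    linarith [(abs_lt.mp (abs_arg_lt_pi_div_two_iff.mpr (Or.inl hre))).2, Real.pi_pos]
  have htranslate : -1 / τ + a = I * (r * τ)⁻¹ := by
    field_simp
    linear_combination h
  have hinvert : -1 / (I * (r * τ)⁻¹) = I * r * τ := by
    field_simp
    linear_combination -I_sq
  have hcpow : (-I * (I * (r * τ)⁻¹)) ^ (1 / 2 : ℂ) = (√r * τ ^ (1 / 2 : ℂ))⁻¹ := by
    rw [← mul_assoc, neg_mul, I_mul_I, neg_neg, one_mul, inv_cpow _ _ harg,
      ofReal_mul_cpow hr hτ, hsqrt]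
  rw [jacobiTheta_eq_inv_mul_jacobiTheta_neg_one_div τ, ← jacobiTheta_add_natCast_of_even ha,
    htranslate, jacobiTheta_eq_inv_mul_jacobiTheta_neg_one_div, hcpow, hinvert,
    neg_I_mul_cpow_half hre]
  field_simp

theorem jacobiTheta_one_div_add {a : ℕ} (ha : 0 < a) (hev : Even a) {y : ℝ} (hy : 0 < y) :
    jacobiTheta ((1 / a : ℝ) + I * (1 / (a ^ 2 * y) : ℝ)) =
      √(a * y) * expPiI (1 / 4) * jacobiTheta ((-1 / a : ℝ) + I * y) := by
  have ha' : (a : ℂ) ≠ 0 := Nat.cast_ne_zero.mpr ha.ne'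
  have hy' : (y : ℂ) ≠ 0 := ofReal_ne_zero.mpr hy.ne'
  rw [jacobiTheta_eq_of_mul_sub_one_eq hev (r := a * y) (by positivity)]
  · congr 2
    push_cast
    field_simp
    linear_combination I_sq
  · rw [add_re, ofReal_re, I_mul_re, ofReal_im, neg_zero, add_zero]
    positivity
  · push_cast
    field_simp
    ring

theorem exp_pi_mul_sq_eq_of_even {a : ℕ} (ha : 0 < a) (hev : Even a) (t : ℝ) (m k : ℤ) :
    cexp (Real.pi * I * (m * a + k) ^ 2 * ((1 / a : ℝ) + I * (t / a ^ 2 : ℝ))) =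
      expPiI (k ^ 2 / a) * Real.exp (-Real.pi * (m + k / a) ^ 2 * t) := by
  have ha' : (a : ℂ) ≠ 0 := Nat.cast_ne_zero.mpr ha.ne'
  obtain ⟨b, hb⟩ := hev
  have hb' : (a : ℂ) = b + b := by exact_mod_cast hb
  rw [expPiI, ofReal_exp, ← Complex.exp_add, Complex.exp_eq_exp_iff_exists_int]
  refine ⟨m * k + b * m ^ 2, ?_⟩
  push_cast
  field_simp
  rw [hb']
  linear_combination (2 * b * m + k) ^ 2 * t * I_sq

theorem jacobiTheta_eq_sum_evenKernel {a : ℕ} (ha : 0 < a) (hev : Even a) {t : ℝ} (ht : 0 < t) :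
    jacobiTheta ((1 / a : ℝ) + I * (t / a ^ 2 : ℝ)) =
      ∑ k : Fin a, expPiI (k ^ 2 / a) * evenKernel ((k / a : ℝ) : UnitAddCircle) t := by
  have : NeZero a := ⟨ha.ne'⟩
  have him : 0 < ((1 / a : ℝ) + I * (t / a ^ 2 : ℝ) : ℂ).im := by
    rw [add_im, ofReal_im, I_mul_im, ofReal_re, zero_add]
    positivity
  have htheta := hasSum_jacobiTheta₂_term 0 him
  rw [← jacobiTheta_eq_jacobiTheta₂, ← (Int.divModEquiv a).symm.hasSum_iff] at htheta
  refine (htheta.prod_fiberwise fun m ↦ hasSum_fintype _).unique (hasSum_sum fun k _ ↦ ?_)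
  have hkernel := (Complex.hasSum_ofReal.mpr
    (hasSum_int_evenKernel (k / a : ℝ) ht)).mul_left (expPiI (k ^ 2 / a))
  refine hkernel.congr_fun fun m ↦ ?_
  simpa [jacobiTheta₂_term, Int.divModEquiv_symm_apply] using
    exp_pi_mul_sq_eq_of_even ha hev t m k

theorem tendsto_jacobiTheta_add_I_mul_atTop (x : ℝ) :
    Tendsto (fun y : ℝ ↦ jacobiTheta (x + I * y)) atTop (𝓝 1) := by
  have him : Tendsto (fun y : ℝ ↦ (x + I * y : ℂ)) atTop (comap im atTop) :=
    tendsto_comap_iff.mpr (tendsto_id.congr fun y ↦ by simp)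
  have hexp : Tendsto (fun τ : ℂ ↦ Real.exp (-Real.pi * τ.im)) (comap im atTop) (𝓝 0) :=
    (Real.tendsto_exp_atBot.comp (tendsto_id.const_mul_atTop_of_neg
      (neg_lt_zero.mpr Real.pi_pos))).comp tendsto_comap
  simpa [Function.comp_def] using
    ((isBigO_at_im_infty_jacobiTheta_sub_one.trans_tendsto hexp).comp him).add_const 1

theorem tendsto_cosKernel_atTop (x : UnitAddCircle) : Tendsto (cosKernel x) atTop (𝓝 1) := by
  obtain ⟨p, hp, hO⟩ := isBigO_atTop_cosKernel_sub x
  have hexp := Real.tendsto_exp_atBot.comp (tendsto_id.const_mul_atTop_of_neg (neg_lt_zero.mpr hp))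
  simpa using (hO.trans_tendsto hexp).add_const 1

theorem sum_expPiI_mul_cosKernel {a : ℕ} (ha : 0 < a) (hev : Even a) {y : ℝ} (hy : 0 < y) :
    ∑ k : Fin a, expPiI (k ^ 2 / a) * cosKernel ((k / a : ℝ) : UnitAddCircle) y =
      √a * expPiI (1 / 4) * jacobiTheta ((-1 / a : ℝ) + I * y) := by
  have hy' : ((√y : ℝ) : ℂ) ≠ 0 := ofReal_ne_zero.mpr (Real.sqrt_pos.mpr hy).ne'
  refine mul_left_cancel₀ hy' ?_
  have hkernel (x : UnitAddCircle) : (evenKernel x (1 / y) : ℂ) = √y * cosKernel x y := by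
    rw [evenKernel_functional_equation, one_div_one_div, ← Real.sqrt_eq_rpow,
      Real.sqrt_div zero_le_one, Real.sqrt_one, one_div_one_div, ofReal_mul]
  calc √y * ∑ k : Fin a, expPiI (k ^ 2 / a) * cosKernel ((k / a : ℝ) : UnitAddCircle) y
      = ∑ k : Fin a, expPiI (k ^ 2 / a) * evenKernel ((k / a : ℝ) : UnitAddCircle) (1 / y) := by
        simp only [hkernel, Finset.mul_sum, mul_left_comm]
    _ = jacobiTheta ((1 / a : ℝ) + I * (1 / (a ^ 2 * y) : ℝ)) := by
        rw [← jacobiTheta_eq_sum_evenKernel ha hev (one_div_pos.mpr hy), div_div, mul_comm y]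
    _ = √y * (√a * expPiI (1 / 4) * jacobiTheta ((-1 / a : ℝ) + I * y)) := by
        rw [jacobiTheta_one_div_add ha hev hy, Real.sqrt_mul (Nat.cast_nonneg a), ofReal_mul]
        ring

theorem sum_fin_expPiI_sq_div {a : ℕ} (ha : 0 < a) (hev : Even a) :
    ∑ k : Fin a, expPiI (k ^ 2 / a) = √a * expPiI (1 / 4) := by
  have hcos : Tendsto
      (fun y ↦ ∑ k : Fin a, expPiI (k ^ 2 / a) * cosKernel ((k / a : ℝ) : UnitAddCircle) y)
      atTop (𝓝 (∑ k : Fin a, expPiI (k ^ 2 / a))) :=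
    tendsto_finsetSum _ fun k _ ↦ by
      simpa using (tendsto_ofReal_iff.mpr (tendsto_cosKernel_atTop _)).const_mul
        (expPiI (k ^ 2 / a))
  have htheta := (tendsto_jacobiTheta_add_I_mul_atTop (-1 / a)).const_mul (√a * expPiI (1 / 4))
  rw [mul_one] at htheta
  refine tendsto_nhds_unique_of_eventuallyEq hcos htheta ?_
  filter_upwards [eventually_gt_atTop 0] with y hy using sum_expPiI_mul_cosKernel ha hev hy

/-- The quadratic exponential `k ↦ exp (π i k² / a)` on `ℤ / a`, evaluated on the representative
`k.val`. It does not depend on the representative when `a` is even. -/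
noncomputable def quadExp (a : ℕ) (k : ZMod a) : ℂ := expPiI (k.val ^ 2 / a)

theorem quadExp_intCast {a : ℕ} (ha : 0 < a) (hev : Even a) (k : ℤ) :
    quadExp a k = expPiI (k ^ 2 / a) := by
  have : NeZero a := ⟨ha.ne'⟩
  have ha' : (a : ℚ) ≠ 0 := Nat.cast_ne_zero.mpr ha.ne'
  obtain ⟨b, hb⟩ := hev
  obtain ⟨m, hm⟩ : ∃ m : ℤ, ((k : ZMod a).val : ℤ) = k + a * m :=
    ⟨-(k / a), by rw [ZMod.val_intCast, Int.emod_def]; ring⟩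
  have hm' : ((k : ZMod a).val : ℚ) = k + a * m := by exact_mod_cast hm
  have hb' : (a : ℚ) = 2 * b := by rw [hb]; push_cast; ring
  refine expPiI_eq_expPiI_iff.mpr ⟨k * m + b * m ^ 2, ?_⟩
  rw [hm']
  field_simp
  push_cast
  rw [hb']
  ring

theorem sum_quadExp {a : ℕ} [NeZero a] (hev : Even a) :
    ∑ k : ZMod a, quadExp a k = √a * expPiI (1 / 4) := by
  rw [← sum_fin_expPiI_sq_div (NeZero.pos a) hev, ← (ZMod.finEquiv a).toEquiv.sum_comp]
  cases a with
  | zero => exact absurd rfl (NeZero.ne 0)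
  | succ n => rfl

end GaussSum

section FiniteGroup

variable {G : Type*} [AddCommGroup G] {A : AddSubgroup G} {f : G → ℂ}

theorem forall_add_eq_or_sum_add_eq_zero [Fintype A] {g : G} (hf : f g ≠ 0)
    (hmul : ∀ x ∈ A, ∀ y ∈ A, f (g + x + y) * f g = f (g + x) * f (g + y)) :
    (∀ x ∈ A, f (g + x) = f g) ∨ ∑ x : A, f (g + x) = 0 := by
  let ψ : AddChar A ℂ :=
    { toFun x := f (g + x) / f g
      map_zero_eq_one' := by simp [hf]
      map_add_eq_mul' x y := by
        have h := hmul x x.2 y y.2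
        rw [AddSubgroup.coe_add, ← add_assoc]
        field_simp
        exact h }
  have hψ (x : A) : f (g + x) = f g * ψ x := (mul_div_cancel₀ _ hf).symm
  by_cases hψ1 : ψ = 0
  · exact Or.inl fun x hx ↦ by simp [hψ ⟨x, hx⟩, hψ1]
  · right
    simp only [hψ, ← Finset.mul_sum, AddChar.sum_eq_ite, hψ1, if_false, mul_zero]

-- Average over the cosets of `A`: each coset contributes zero unless `f` is constant on it.
theorem exists_sum_eq_natCast_mul [Fintype G] {c : ℂ} (hf : ∀ g, f g ≠ 0)
    (hmul : ∀ g, ∀ x ∈ A, ∀ y ∈ A, f (g + x + y) * f g = f (g + x) * f (g + y))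
    (hc : ∀ g, (∀ x ∈ A, f (g + x) = f g) → f g = c) :
    ∃ k : ℕ, ∑ g, f g = k * c := by
  classical
  have hA : (Fintype.card A : ℂ) ≠ 0 := Nat.cast_ne_zero.mpr Fintype.card_ne_zero
  have hcoset (g : G) : ∑ x : A, f (g + x) =
      Fintype.card A * if ∀ x ∈ A, f (g + x) = f g then c else 0 := by
    split_ifs with hg
    · simp [hg, hc g hg]
    · simp [(forall_add_eq_or_sum_add_eq_zero (hf g) (hmul g)).resolve_left hg]
  have haverage : Fintype.card A * ∑ g, f g = ∑ g, ∑ x : A, f (g + x) := by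
    have htranslate (x : A) : ∑ g, f (g + x) = ∑ g, f g :=
      Equiv.sum_comp (Equiv.addRight (x : G)) f
    rw [Finset.sum_comm]
    simp only [htranslate, Finset.sum_const, nsmul_eq_mul, Finset.card_univ]
  refine ⟨Finset.card {g | ∀ x ∈ A, f (g + x) = f g}, mul_left_cancel₀ hA ?_⟩
  simp only [haverage, hcoset, ← Finset.mul_sum, Finset.sum_ite, Finset.sum_const, nsmul_eq_mul,
    mul_zero, add_zero]

end FiniteGroup

section Shadow

variable {B : V →ₗ[ℚ] V →ₗ[ℚ] ℚ} {N : Submodule ℤ V} {s t v : V}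

/-- The shadow of a lattice `N`, in the sense of Conway and Sloane: the halves of the
characteristic vectors of `N`. -/
def shadow (B : V →ₗ[ℚ] V →ₗ[ℚ] ℚ) (N : Submodule ℤ V) : Set V :=
  {s | ∀ x ∈ N, ∃ k : ℤ, B s x = B x x / 2 + k}

theorem add_mem_shadow (hN : N ≤ dualLattice B N) (hs : s ∈ shadow B N) (hv : v ∈ N) :
    s + v ∈ shadow B N := by
  intro x hx
  obtain ⟨k, hk⟩ := hs x hx
  obtain ⟨l, hl⟩ := hN hv x hx
  refine ⟨k + l, ?_⟩
  rw [map_add, LinearMap.add_apply, hk, hl]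
  push_cast
  ring

theorem sub_mem_of_mem_shadow (hU : IsUnimodular B N) (hs : s ∈ shadow B N)
    (ht : t ∈ shadow B N) : t - s ∈ N := by
  rw [hU]
  intro x hx
  obtain ⟨k, hk⟩ := hs x hx
  obtain ⟨l, hl⟩ := ht x hx
  refine ⟨l - k, ?_⟩
  rw [map_sub, LinearMap.sub_apply, hk, hl]
  push_cast
  ring

theorem apply_add_self (hB : ∀ x y, B x y = B y x) (x y : V) :
    B (x + y) (x + y) = B x x + 2 * B x y + B y y := by
  simp only [map_add, LinearMap.add_apply, hB y x]
  ring

theorem mem_shadow_iff_forall_norm_add (hB : ∀ x y, B x y = B y x) (hN : N ≤ dualLattice B N) :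
    s ∈ shadow B N ↔ ∀ x ∈ N, ∃ k : ℤ, B (s + x) (s + x) = B s s + 2 * k := by
  refine forall₂_congr fun x hx ↦ ?_
  obtain ⟨n, hn⟩ := hN hx x hx
  simp only [apply_add_self hB, hn]
  constructor
  · rintro ⟨k, hk⟩
    exact ⟨n + k, by rw [hk]; push_cast; ring⟩
  · rintro ⟨k, hk⟩
    exact ⟨k - n, by push_cast; linarith⟩

theorem exists_norm_eq_add_of_mem_shadow (hB : ∀ x y, B x y = B y x) (hU : IsUnimodular B N)
    (hs : s ∈ shadow B N) (ht : t ∈ shadow B N) : ∃ k : ℤ, B t t = B s s + 2 * k := by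
  simpa using (mem_shadow_iff_forall_norm_add hB hU.le).mp hs _ (sub_mem_of_mem_shadow hU hs ht)

-- For an integral lattice `x ↦ (x, x)` is additive modulo `2`.
theorem mem_shadow_of_span_eq (hB : ∀ x y, B x y = B y x) (hN : N ≤ dualLattice B N) {S : Set V}
    (hS : Submodule.span ℤ S = N) (hs : ∀ x ∈ S, B s x = B x x / 2) : s ∈ shadow B N := by
  rintro x hx
  rw [← hS] at hx
  induction hx using Submodule.span_induction with
  | mem x hx => exact ⟨0, by simp [hs x hx]⟩
  | zero => exact ⟨0, by simp⟩
  | add x y hx hy ihx ihy =>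
    obtain ⟨k, hk⟩ := ihx
    obtain ⟨l, hl⟩ := ihy
    obtain ⟨n, hn⟩ := hN (hS ▸ hx) y (hS ▸ hy)
    refine ⟨k + l - n, ?_⟩
    rw [apply_add_self hB, map_add, hk, hl, hn]
    push_cast
    ring
  | smul c x hx ih =>
    obtain ⟨k, hk⟩ := ih
    obtain ⟨n, hn⟩ := hN (hS ▸ hx) x (hS ▸ hx)
    obtain ⟨d, hd⟩ := Int.even_mul_pred_self c
    have hd' : (c : ℚ) * (c - 1) = d + d := by exact_mod_cast hd
    refine ⟨c * k - d * n, ?_⟩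
    rw [← Int.cast_smul_eq_zsmul ℚ]
    simp only [map_smul, LinearMap.smul_apply, smul_eq_mul, hk, hn]
    push_cast
    linear_combination (-(n : ℚ) / 2) * hd'

theorem nondegenerate_of_isPosDefSymm (hB : IsPosDefSymm B) : B.Nondegenerate :=
  (LinearMap.IsSymm.mk hB.1).isRefl.nondegenerate_iff_separatingLeft.mpr fun x hx ↦
    by_contra fun hne ↦ (hB.2 x hne).ne' (hx x)

theorem finiteDimensional_of_isIntegralLattice (hN : IsIntegralLattice B N) :
    FiniteDimensional ℚ V := by
  obtain ⟨S, hS⟩ := hN.fg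
  exact ⟨S, by rw [← Submodule.span_span_of_tower ℤ ℚ, hS, hN.spans]⟩

theorem shadow_nonempty (hB : IsPosDefSymm B) (hN : IsIntegralLattice B N) :
    (shadow B N).Nonempty := by
  have : Submodule.IsLattice ℚ N := ⟨hN.fg, hN.spans⟩
  have : Module.Finite ℤ N := Module.Finite.iff_fg.mpr hN.fg
  have : Module.Free ℤ N := Submodule.IsLattice.free ℚ N
  let b := Module.Free.chooseBasis ℤ N
  let bQ := b.extendOfIsLattice ℚ
  have hbQ (i) : bQ i = b i := b.extendOfIsLattice_apply ℚ i
  have := finiteDimensional_of_isIntegralLattice hN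
  let φ : Module.Dual ℚ V := bQ.constr ℚ fun i ↦ B (b i) (b i) / 2
  have hspan : Submodule.span ℤ (Set.range fun i ↦ (b i : V)) = N := by
    rw [← Function.comp_def Subtype.val, Set.range_comp, ← N.coe_subtype, ← Submodule.map_span,
      b.span_eq, Submodule.map_subtype_top]
  refine ⟨(LinearMap.BilinForm.toDual B (nondegenerate_of_isPosDefSymm hB)).symm φ,
    mem_shadow_of_span_eq hB.1 hN.integral hspan ?_⟩
  rintro _ ⟨i, rfl⟩
  rw [LinearMap.BilinForm.apply_toDual_symm_apply]
  simp only [← hbQ, φ, Module.Basis.constr_basis]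

end Shadow

section OrthogonalBasis

variable {B : V →ₗ[ℚ] V →ₗ[ℚ] ℚ} {N : Submodule ℤ V}

theorem exists_zsmul_mem_of_span_eq_top (hN : Submodule.span ℚ (N : Set V) = ⊤) (x : V) :
    ∃ n : ℤ, n ≠ 0 ∧ n • x ∈ N := by
  have hx : x ∈ Submodule.span ℚ (N : Set V) := hN ▸ Submodule.mem_top
  obtain ⟨y, hy, n, rfl⟩ := (IsLocalization.mem_span_iff (nonZeroDivisors ℤ)).mp hx
  rw [Submodule.span_eq] at hy
  refine ⟨n, nonZeroDivisors.coe_ne_zero n, ?_⟩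
  rwa [← smul_assoc, IsLocalization.smul_mk'_one, IsLocalization.mk'_self', one_smul]

theorem exists_orthogonal_basis_mem [FiniteDimensional ℚ V] (hB : ∀ x y, B x y = B y x)
    (hN : Submodule.span ℚ (N : Set V) = ⊤) :
    ∃ e : Module.Basis (Fin (Module.finrank ℚ V)) ℚ V,
      (∀ i, e i ∈ N) ∧ Pairwise fun i j ↦ B (e i) (e j) = 0 := by
  obtain ⟨v, hv⟩ := LinearMap.BilinForm.exists_orthogonal_basis (B := B) ⟨hB⟩
  choose n hn hmem using fun i ↦ exists_zsmul_mem_of_span_eq_top hN (v i)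
  refine ⟨v.isUnitSMul fun i ↦ (Int.cast_ne_zero.mpr (hn i)).isUnit, fun i ↦ ?_, fun i j hij ↦ ?_⟩
  · simpa only [Module.Basis.isUnitSMul_apply, Int.cast_smul_eq_zsmul] using hmem i
  · have hvij : B (v i) (v j) = 0 := hv hij
    simp [Module.Basis.isUnitSMul_apply, hvij]

-- Doubling an orthogonal basis contained in `N` makes the norms multiples of `4`.
theorem exists_orthogonal_basis_mem_even_norm [FiniteDimensional ℚ V] (hB : IsPosDefSymm B)
    (hN : IsIntegralLattice B N) :
    ∃ (e : Module.Basis (Fin (Module.finrank ℚ V)) ℚ V) (a : Fin (Module.finrank ℚ V) → ℕ),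
      (∀ i, e i ∈ N) ∧ (Pairwise fun i j ↦ B (e i) (e j) = 0) ∧ (∀ i, B (e i) (e i) = a i) ∧
        ∀ i, 0 < a i ∧ Even (a i) := by
  obtain ⟨e, hmem, horth⟩ := exists_orthogonal_basis_mem hB.1 hN.spans
  have hnorm (i) : ∃ k : ℕ, 0 < k ∧ B (e i) (e i) = k := by
    obtain ⟨n, hn⟩ := hN.integral (hmem i) _ (hmem i)
    have hpos : 0 < n := by exact_mod_cast hn ▸ hB.2 _ (e.ne_zero i)
    lift n to ℕ using hpos.le
    exact ⟨n, by exact_mod_cast hpos, hn⟩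
  choose k hk hek using hnorm
  refine ⟨e.isUnitSMul fun _ ↦ (two_ne_zero (α := ℚ)).isUnit, fun i ↦ 4 * k i, fun i ↦ ?_,
    fun i j hij ↦ ?_, fun i ↦ ?_, fun i ↦ ⟨by have := hk i; positivity, ⟨2 * k i, by ring⟩⟩⟩
  · simpa [Module.Basis.isUnitSMul_apply, two_smul] using N.add_mem (hmem i) (hmem i)
  · simp [Module.Basis.isUnitSMul_apply, horth hij]
  · simp only [Module.Basis.isUnitSMul_apply, map_smul, LinearMap.smul_apply, smul_eq_mul, hek]
    push_cast
    ring

end OrthogonalBasis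

section VanDerBlij

variable {B : V →ₗ[ℚ] V →ₗ[ℚ] ℚ} {N : Submodule ℤ V} {ι : Type*} {e : ι → V} {a : ι → ℕ}

/-- The reduction map `ℤ^ι → ∏ᵢ ℤ / aᵢ`. -/
def reduce (a : ι → ℕ) : (ι → ℤ) →+ ∀ i, ZMod (a i) :=
  AddMonoidHom.piMap fun i ↦ Int.castAddHom (ZMod (a i))

theorem reduce_surjective (a : ι → ℕ) : Function.Surjective (reduce a) :=
  Function.Surjective.piMap fun _ ↦ ZMod.intCast_surjective

variable [Fintype ι]

/-- The vector `∑ᵢ (kᵢ / aᵢ) eᵢ`. When the `eᵢ` are orthogonal of norms `aᵢ`, these vectors form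
the dual lattice of `⨁ᵢ ℤ eᵢ`. -/
def dualVector (e : ι → V) (a : ι → ℕ) : (ι → ℤ) →+ V where
  toFun k := ∑ i, (k i / a i : ℚ) • e i
  map_zero' := by simp
  map_add' k l := by simp [add_div, add_smul, Finset.sum_add_distrib]

theorem dualVector_norm (horth : Pairwise fun i j ↦ B (e i) (e j) = 0)
    (hnorm : ∀ i, B (e i) (e i) = a i) (ha : ∀ i, 0 < a i) (k : ι → ℤ) :
    B (dualVector e a k) (dualVector e a k) = ∑ i, (k i ^ 2 / a i : ℚ) := by
  classical
  have hgram (i j) : B (e i) (e j) = if i = j then (a i : ℚ) else 0 := by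
    split_ifs with hij
    · rw [← hij, hnorm]
    · exact horth hij
  have ha' (i) : (a i : ℚ) ≠ 0 := Nat.cast_ne_zero.mpr (ha i).ne'
  simp only [dualVector, AddMonoidHom.coe_mk, ZeroHom.coe_mk, map_sum, map_smul,
    LinearMap.sum_apply, LinearMap.smul_apply, smul_eq_mul, hgram, mul_ite, mul_zero,
    Finset.sum_ite_eq', Finset.mem_univ, if_true]
  exact Finset.sum_congr rfl fun i _ ↦ by field_simp [ha' i]

theorem exists_dualVector_eq {e : Module.Basis ι ℚ V}
    (horth : Pairwise fun i j ↦ B (e i) (e j) = 0) (hnorm : ∀ i, B (e i) (e i) = a i)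
    (ha : ∀ i, 0 < a i) {x : V} (hx : ∀ i, ∃ n : ℤ, B x (e i) = n) :
    ∃ k, dualVector e a k = x := by
  choose k hk using hx
  refine ⟨k, ?_⟩
  have hrepr (i) : (k i / a i : ℚ) = e.repr x i := by
    rw [div_eq_iff (Nat.cast_ne_zero.mpr (ha i).ne'), ← hk, ← hnorm]
    conv_lhs => rw [← e.sum_repr x]
    rw [map_sum, LinearMap.sum_apply, Finset.sum_eq_single i]
    · simp
    · intro j _ hji
      simp [horth hji]
    · simp
  simp [dualVector, hrepr, e.sum_repr]

theorem prod_quadExp_reduce (horth : Pairwise fun i j ↦ B (e i) (e j) = 0)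
    (hnorm : ∀ i, B (e i) (e i) = a i) (ha : ∀ i, 0 < a i ∧ Even (a i)) (k : ι → ℤ) :
    ∏ i, quadExp (a i) (reduce a k i) = expPiI (B (dualVector e a k) (dualVector e a k)) := by
  rw [dualVector_norm horth hnorm fun i ↦ (ha i).1, expPiI_sum]
  exact Finset.prod_congr rfl fun i _ ↦ quadExp_intCast (ha i).1 (ha i).2 (k i)

theorem exists_sum_prod_quadExp_eq (hB : ∀ x y, B x y = B y x) (hU : IsUnimodular B N)
    {e : Module.Basis ι ℚ V} (hmem : ∀ i, e i ∈ N)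
    (horth : Pairwise fun i j ↦ B (e i) (e j) = 0)
    (hnorm : ∀ i, B (e i) (e i) = a i) [∀ i, NeZero (a i)] (ha : ∀ i, Even (a i))
    [DecidableEq ι] {s : V} (hs : s ∈ shadow B N) :
    ∃ k : ℕ, ∑ g : ∀ i, ZMod (a i), ∏ i, quadExp (a i) (g i) = k * expPiI (B s s) := by
  have hf := prod_quadExp_reduce horth hnorm fun i ↦ ⟨NeZero.pos (a i), ha i⟩
  have hrange (x) (hx : x ∈ N) : ∃ k, dualVector e a k = x :=
    exists_dualVector_eq horth hnorm (fun i ↦ NeZero.pos (a i)) fun i ↦ hU.le hx _ (hmem i)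
  refine exists_sum_eq_natCast_mul
    (A := (N.toAddSubgroup.comap (dualVector e a)).map (reduce a)) (fun g ↦ ?_) ?_ ?_
  · exact Finset.prod_ne_zero_iff.mpr fun i _ ↦ expPiI_ne_zero _
  · rintro g _ ⟨l, hl, rfl⟩ _ ⟨m, hm, rfl⟩
    obtain ⟨k, rfl⟩ := reduce_surjective a g
    obtain ⟨n, hn⟩ := hU.le hl _ hm
    simp only [← map_add, hf, ← expPiI_add]
    refine expPiI_eq_expPiI_iff.mpr ⟨n, ?_⟩
    simp only [map_add, LinearMap.add_apply, hB (dualVector e a m), ← hn]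
    rw [hB (dualVector e a l) (dualVector e a k)]
    ring
  · intro g hg
    obtain ⟨k, rfl⟩ := reduce_surjective a g
    rw [hf]
    refine expPiI_eq_expPiI_iff.mpr (exists_norm_eq_add_of_mem_shadow hB hU hs ?_)
    rw [mem_shadow_iff_forall_norm_add hB hU.le]
    intro x hx
    obtain ⟨l, rfl⟩ := hrange x hx
    have h := hg _ ⟨l, hx, rfl⟩
    rwa [← map_add, hf, hf, map_add, expPiI_eq_expPiI_iff] at h

theorem sum_prod_quadExp [∀ i, NeZero (a i)] [DecidableEq ι] (ha : ∀ i, Even (a i)) :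
    ∑ g : ∀ i, ZMod (a i), ∏ i, quadExp (a i) (g i) =
      (∏ i, √(a i) : ℝ) * expPiI (Fintype.card ι / 4) := by
  have hcard : (Fintype.card ι / 4 : ℚ) = ∑ _ : ι, (1 / 4 : ℚ) := by
    rw [Finset.sum_const, nsmul_eq_mul, Finset.card_univ]
    ring
  rw [← Fintype.piFinset_univ, ← Finset.prod_univ_sum, hcard, expPiI_sum, Complex.ofReal_prod,
    ← Finset.prod_mul_distrib]
  exact Finset.prod_congr rfl fun i _ ↦ sum_quadExp (ha i)

theorem exists_norm_eq_finrank_div_four_add (hB : IsPosDefSymm B) (hN : IsIntegralLattice B N)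
    (hU : IsUnimodular B N) {s : V} (hs : s ∈ shadow B N) :
    ∃ m : ℤ, B s s = Module.finrank ℚ V / 4 + 2 * m := by
  have : FiniteDimensional ℚ V := finiteDimensional_of_isIntegralLattice hN
  obtain ⟨e, a, hmem, horth, hnorm, ha⟩ := exists_orthogonal_basis_mem_even_norm hB hN
  have (i : Fin (Module.finrank ℚ V)) : NeZero (a i) := ⟨(ha i).1.ne'⟩
  obtain ⟨k, hk⟩ := exists_sum_prod_quadExp_eq hB.1 hU hmem horth hnorm (fun i ↦ (ha i).2) hs
  rw [sum_prod_quadExp fun i ↦ (ha i).2, Fintype.card_fin] at hk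
  have hprod : 0 < ∏ i, √(a i) :=
    Finset.prod_pos fun i _ ↦ Real.sqrt_pos.mpr (Nat.cast_pos.mpr (ha i).1)
  have hnorm_eq : (∏ i, √(a i) : ℝ) = k := by
    simpa [norm_expPiI, abs_of_nonneg (Real.sqrt_nonneg _)] using congrArg norm hk
  rw [← Complex.ofReal_natCast, ← hnorm_eq] at hk
  exact expPiI_eq_expPiI_iff.mp (mul_left_cancel₀ (Complex.ofReal_ne_zero.mpr hprod.ne') hk).symm

theorem exists_norm_eq_two_mul_of_eight_dvd_finrank (hB : IsPosDefSymm B)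
    (hN : IsIntegralLattice B N) (hU : IsUnimodular B N) (hrank : 8 ∣ Module.finrank ℚ V) {s : V}
    (hs : s ∈ shadow B N) : ∃ m : ℤ, B s s = 2 * m := by
  obtain ⟨m, hm⟩ := exists_norm_eq_finrank_div_four_add hB hN hU hs
  obtain ⟨c, hc⟩ := hrank
  exact ⟨c + m, by rw [hm, hc]; push_cast; ring⟩

end VanDerBlij

section IndexTwo

variable {M : Type*} [AddCommGroup M] {D D' L : Submodule ℤ M} {s x y : M}

theorem IndexTwo.sub_mem_of_notMem (h : IndexTwo D L) (hx : x ∈ L) (hxD : x ∉ D)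
    (hy : y ∈ L) (hyD : y ∉ D) : x - y ∈ D := by
  obtain ⟨a, -, -, ha⟩ := h.2
  have := D.sub_mem ((ha x hx).resolve_left hxD) ((ha y hy).resolve_left hyD)
  rwa [sub_sub_sub_cancel_right] at this

theorem IndexTwo.mem_or_sub_mem (h : IndexTwo D L) (hx : x ∈ L) (hy : y ∈ L)
    (hyD : y ∉ D) : x ∈ D ∨ x - y ∈ D :=
  or_iff_not_imp_left.mpr fun hxD ↦ h.sub_mem_of_notMem hx hxD hy hyD

theorem IndexTwo.eq_of_le (h : IndexTwo D L) (h' : IndexTwo D' L) (hle : D ≤ D') : D = D' := by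
  refine hle.antisymm fun x hx ↦ by_contra fun hxD ↦ ?_
  obtain ⟨a, haL, haD', -⟩ := h'.2
  have := hle (h.sub_mem_of_notMem (h'.1 hx) hxD haL fun ha ↦ haD' (hle ha))
  exact haD' ((D'.sub_mem_iff_right hx).mp this)

theorem IndexTwo.two_zsmul_mem (h : IndexTwo D L) (hx : x ∈ L) : (2 : ℤ) • x ∈ D := by
  by_cases hxD : x ∈ D
  · exact D.smul_mem 2 hxD
  · by_contra h2
    rw [two_zsmul] at h2
    have := h.sub_mem_of_notMem (L.add_mem hx hx) h2 hx hxD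
    rw [add_sub_cancel_right] at this
    exact hxD this

theorem mem_sup_span_singleton_iff (hs : (2 : ℤ) • s ∈ D) :
    x ∈ D ⊔ Submodule.span ℤ {s} ↔ x ∈ D ∨ x - s ∈ D := by
  constructor
  · intro hx
    obtain ⟨d, hd, z, hz, rfl⟩ := Submodule.mem_sup.mp hx
    obtain ⟨c, rfl⟩ := Submodule.mem_span_singleton.mp hz
    obtain ⟨m, rfl | rfl⟩ := Int.even_or_odd' c
    · exact Or.inl (D.add_mem hd (by rw [mul_comm, mul_smul]; exact D.smul_mem m hs))
    · right
      rw [add_smul, one_smul, ← add_assoc, add_sub_cancel_right, mul_comm, mul_smul]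
      exact D.add_mem hd (D.smul_mem m hs)
  · rintro (hx | hx)
    · exact Submodule.mem_sup_left hx
    · rw [← sub_add_cancel x s]
      exact add_mem (Submodule.mem_sup_left hx)
        (Submodule.mem_sup_right (Submodule.mem_span_singleton_self s))

theorem indexTwo_sup_span_singleton (hs : (2 : ℤ) • s ∈ D) (hsD : s ∉ D) :
    IndexTwo D (D ⊔ Submodule.span ℤ {s}) :=
  ⟨le_sup_left, s, Submodule.mem_sup_right (Submodule.mem_span_singleton_self s), hsD,
    fun _ hx ↦ (mem_sup_span_singleton_iff hs).mp hx⟩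

theorem IndexTwo.eq_sup_span_singleton (h : IndexTwo D L) (hs : s ∈ L) (hsD : s ∉ D) :
    L = D ⊔ Submodule.span ℤ {s} := by
  ext x
  rw [mem_sup_span_singleton_iff (h.two_zsmul_mem hs)]
  refine ⟨fun hx ↦ h.mem_or_sub_mem hx hs hsD, ?_⟩
  rintro (hx | hx)
  · exact h.1 hx
  · exact (L.sub_mem_iff_left hs).mp (h.1 hx)

theorem IndexTwo.span_eq {D L : Submodule ℤ V} (h : IndexTwo D L) :
    Submodule.span ℚ (D : Set V) = Submodule.span ℚ (L : Set V) := by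
  refine (Submodule.span_mono h.1).antisymm (Submodule.span_le.mpr fun x hx ↦ ?_)
  have := Submodule.smul_mem _ (1 / 2 : ℚ) (Submodule.subset_span (R := ℚ) (h.two_zsmul_mem hx))
  rwa [← Int.cast_smul_eq_zsmul ℚ, smul_smul, Int.cast_ofNat, one_div_mul_cancel two_ne_zero,
    one_smul] at this

end IndexTwo

section EvenSublattice

variable {B : V →ₗ[ℚ] V →ₗ[ℚ] ℚ} {N E : Submodule ℤ V} {s x : V}

theorem IsEvenLat.le_dualLattice (hB : ∀ x y, B x y = B y x) (hE : IsEvenLat B E) :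
    E ≤ dualLattice B E := by
  intro x hx y hy
  obtain ⟨k, hk⟩ := hE x hx
  obtain ⟨l, hl⟩ := hE y hy
  obtain ⟨m, hm⟩ := hE (x + y) (E.add_mem hx hy)
  rw [apply_add_self hB, hk, hl] at hm
  exact ⟨m - k - l, by push_cast; linarith⟩

/-- The even sublattice `N₀` of an integral lattice `N`; its carrier is `evenSet B N`. -/
def evenSublattice (hB : ∀ x y, B x y = B y x) (hN : N ≤ dualLattice B N) : Submodule ℤ V where
  carrier := evenSet B N
  zero_mem' := ⟨N.zero_mem, 0, by simp⟩
  add_mem' := by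
    rintro x y ⟨hx, k, hk⟩ ⟨hy, l, hl⟩
    obtain ⟨n, hn⟩ := hN hx y hy
    refine ⟨N.add_mem hx hy, k + n + l, ?_⟩
    rw [apply_add_self hB, hk, hl, hn]
    push_cast
    ring
  smul_mem' := by
    rintro c x ⟨hx, k, hk⟩
    refine ⟨N.smul_mem c hx, c ^ 2 * k, ?_⟩
    rw [← Int.cast_smul_eq_zsmul ℚ, map_smul, map_smul, LinearMap.smul_apply, hk]
    simp only [smul_eq_mul]
    push_cast
    ring

theorem exists_norm_eq_of_notMem_evenSet (hN : N ≤ dualLattice B N) (hx : x ∈ N)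
    (hxe : x ∉ evenSet B N) : ∃ n : ℤ, B x x = 2 * n + 1 := by
  obtain ⟨k, hk⟩ := hN hx x hx
  obtain ⟨m, rfl | rfl⟩ := Int.even_or_odd' k
  · exact absurd ⟨hx, m, by rw [hk]; push_cast; ring⟩ hxe
  · exact ⟨m, by rw [hk]; push_cast; ring⟩

variable {hB : ∀ x y, B x y = B y x} {hN : N ≤ dualLattice B N}

theorem indexTwo_evenSublattice (hodd : IsOddLat B N) : IndexTwo (evenSublattice hB hN) N := by
  obtain ⟨v, hv, n, hn⟩ := hodd
  refine ⟨fun x hx ↦ hx.1, v, hv, ?_, fun x hx ↦ ?_⟩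
  · rintro ⟨-, k, hk⟩
    have : 2 * n + 1 = 2 * k := by exact_mod_cast hn.symm.trans hk
    omega
  · refine or_iff_not_imp_left.mpr fun hxe ↦ ?_
    obtain ⟨m, hm⟩ := exists_norm_eq_of_notMem_evenSet hN hx hxe
    obtain ⟨l, hl⟩ := hN hx v hv
    refine ⟨N.sub_mem hx hv, m - l + n + 1, ?_⟩
    simp only [map_sub, LinearMap.sub_apply, hB v x, hm, hl, hn]
    push_cast
    ring

theorem notMem_of_mem_shadow (hN : N ≤ dualLattice B N) (hodd : IsOddLat B N)
    (hs : s ∈ shadow B N) : s ∉ N := by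
  intro hsN
  obtain ⟨v, hv, n, hn⟩ := hodd
  obtain ⟨k, hk⟩ := hs v hv
  obtain ⟨l, hl⟩ := hN hsN v hv
  have : 2 * l = 2 * n + 1 + 2 * k := by
    have : (2 * l : ℚ) = 2 * n + 1 + 2 * k := by linarith
    exact_mod_cast this
  omega

theorem mem_or_mem_shadow_of_mem_dual_evenSublattice (hU : IsUnimodular B N)
    (hx : x ∈ dualLattice B (evenSublattice hB hN)) : x ∈ N ∨ x ∈ shadow B N := by
  by_cases hint : x ∈ dualLattice B N
  · exact Or.inl (hU ▸ hint)
  right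
  obtain ⟨v, hv, hxv⟩ : ∃ v ∈ N, ¬∃ n : ℤ, B x v = n := by simpa [dualLattice] using hint
  have hvD : v ∉ evenSublattice hB hN := fun h ↦ hxv (hx v h)
  have hindex : IndexTwo (evenSublattice hB hN) N :=
    indexTwo_evenSublattice ⟨v, hv, exists_norm_eq_of_notMem_evenSet hN hv hvD⟩
  obtain ⟨l, hl⟩ : ∃ l : ℤ, B x v = l + 1 / 2 := by
    obtain ⟨k, hk⟩ := hx _ (hindex.two_zsmul_mem hv)
    rw [two_zsmul, map_add, ← two_mul] at hk
    obtain ⟨l, rfl | rfl⟩ := Int.even_or_odd' k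
    · exact absurd ⟨l, by push_cast at hk; linarith⟩ hxv
    · exact ⟨l, by push_cast at hk; linarith⟩
  intro y hy
  by_cases hyD : y ∈ evenSublattice hB hN
  · obtain ⟨k, hk⟩ := hx y hyD
    obtain ⟨-, n, hn⟩ := hyD
    exact ⟨k - n, by rw [hk, hn]; push_cast; ring⟩
  · obtain ⟨k, hk⟩ := hx _ (hindex.sub_mem_of_notMem hy hyD hv hvD)
    obtain ⟨n, hn⟩ := exists_norm_eq_of_notMem_evenSet hN hy hyD
    rw [map_sub] at hk
    exact ⟨k + l - n, by push_cast; linarith⟩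

theorem two_zsmul_mem_evenSublattice (hU : IsUnimodular B N) (hs : s ∈ shadow B N)
    (heven : ∃ m : ℤ, B s s = 2 * m) : (2 : ℤ) • s ∈ evenSublattice hB hN := by
  obtain ⟨m, hm⟩ := heven
  have hnorm : B ((2 : ℤ) • s) ((2 : ℤ) • s) = 2 * (4 * m : ℤ) := by
    rw [two_zsmul, apply_add_self hB, hm]
    push_cast
    ring
  refine ⟨?_, 4 * m, hnorm⟩
  rw [hU]
  intro x hx
  obtain ⟨k, hk⟩ := hs x hx
  obtain ⟨n, hn⟩ := hN hx x hx
  refine ⟨n + 2 * k, ?_⟩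
  rw [two_zsmul, map_add, LinearMap.add_apply, hk, hn]
  push_cast
  ring

end EvenSublattice

section EvenNeighbors

variable {B : V →ₗ[ℚ] V →ₗ[ℚ] ℚ} {N E : Submodule ℤ V} {s t x : V}

/-- The lattice `N₀ + ℤ s`, an even neighbor of the odd unimodular lattice `N` when `s` is a vector
of even norm in the shadow of `N`. -/
def evenNeighbor (hB : ∀ x y, B x y = B y x) (hN : N ≤ dualLattice B N) (s : V) :
    Submodule ℤ V :=
  evenSublattice hB hN ⊔ Submodule.span ℤ {s}

variable {hB : ∀ x y, B x y = B y x} {hN : N ≤ dualLattice B N}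

theorem mem_evenNeighbor_self : s ∈ evenNeighbor hB hN s :=
  Submodule.mem_sup_right (Submodule.mem_span_singleton_self s)

theorem mem_evenNeighbor_iff (hU : IsUnimodular B N) (hs : s ∈ shadow B N)
    (hss : ∃ m : ℤ, B s s = 2 * m) :
    x ∈ evenNeighbor hB hN s ↔ x ∈ evenSublattice hB hN ∨ x - s ∈ evenSublattice hB hN :=
  mem_sup_span_singleton_iff (two_zsmul_mem_evenSublattice hU hs hss)

theorem isEvenLat_evenNeighbor (hU : IsUnimodular B N) (hs : s ∈ shadow B N)
    (hss : ∃ m : ℤ, B s s = 2 * m) : IsEvenLat B (evenNeighbor hB hN s) := by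
  intro x hx
  rcases (mem_evenNeighbor_iff hU hs hss).mp hx with hx | hx
  · exact hx.2
  · obtain ⟨m, hm⟩ := hss
    obtain ⟨k, hk⟩ := (mem_shadow_iff_forall_norm_add hB hN).mp hs _ hx.1
    rw [add_sub_cancel, hm] at hk
    exact ⟨m + k, by rw [hk]; push_cast; ring⟩

theorem mem_evenSublattice_of_mem_dual_evenNeighbor (hs : s ∈ shadow B N) (hx : x ∈ N)
    (hxE : x ∈ dualLattice B (evenNeighbor hB hN s)) : x ∈ evenSublattice hB hN := by
  obtain ⟨k, hk⟩ := hs x hx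
  obtain ⟨l, hl⟩ := hxE s mem_evenNeighbor_self
  rw [hB x s, hk] at hl
  exact ⟨hx, l - k, by push_cast; linarith⟩

theorem isUnimodular_evenNeighbor (hU : IsUnimodular B N) (hs : s ∈ shadow B N)
    (hss : ∃ m : ℤ, B s s = 2 * m) : IsUnimodular B (evenNeighbor hB hN s) := by
  have hint := (isEvenLat_evenNeighbor (hB := hB) (hN := hN) hU hs hss).le_dualLattice hB
  refine hint.antisymm fun x hx ↦ (mem_evenNeighbor_iff hU hs hss).mpr ?_
  have hx₀ : x ∈ dualLattice B (evenSublattice hB hN) := fun y hy ↦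
    hx y (Submodule.mem_sup_left hy)
  rcases mem_or_mem_shadow_of_mem_dual_evenSublattice hU hx₀ with hxN | hxS
  · exact Or.inl (mem_evenSublattice_of_mem_dual_evenNeighbor hs hxN hx)
  · exact Or.inr (mem_evenSublattice_of_mem_dual_evenNeighbor hs (sub_mem_of_mem_shadow hU hs hxS)
      (sub_mem hx (hint mem_evenNeighbor_self)))

theorem inf_evenNeighbor (hU : IsUnimodular B N) (hodd : IsOddLat B N) (hs : s ∈ shadow B N)
    (hss : ∃ m : ℤ, B s s = 2 * m) : N ⊓ evenNeighbor hB hN s = evenSublattice hB hN := by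
  refine le_antisymm ?_ (le_inf (fun x hx ↦ hx.1) le_sup_left)
  rintro x ⟨hx, hxE⟩
  refine ((mem_evenNeighbor_iff hU hs hss).mp hxE).resolve_right fun hxs ↦ ?_
  exact notMem_of_mem_shadow hN hodd hs ((N.sub_mem_iff_right hx).mp hxs.1)

theorem isEvenNeighbor_evenNeighbor (hL : IsIntegralLattice B N) (hU : IsUnimodular B N)
    (hodd : IsOddLat B N) (hs : s ∈ shadow B N) (hss : ∃ m : ℤ, B s s = 2 * m) :
    IsEvenNeighbor B N (evenNeighbor hB hN s) := by
  have hD : IndexTwo (evenSublattice hB hN) N := indexTwo_evenSublattice hodd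
  have hDE : IndexTwo (evenSublattice hB hN) (evenNeighbor hB hN s) :=
    indexTwo_sup_span_singleton (two_zsmul_mem_evenSublattice hU hs hss)
      fun h ↦ notMem_of_mem_shadow hN hodd hs h.1
  have heven := isEvenLat_evenNeighbor (hB := hB) (hN := hN) hU hs hss
  refine ⟨⟨?_, ?_, heven.le_dualLattice hB⟩, isUnimodular_evenNeighbor hU hs hss, heven, ?_⟩
  · exact (Submodule.FG.of_le hL.fg hD.1).sup (Submodule.fg_span_singleton s)
  · rw [← hDE.span_eq, hD.span_eq, hL.spans]
  · rw [Neighbors, inf_evenNeighbor hU hodd hs hss]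
    exact ⟨hD, hDE⟩

theorem evenNeighbor_eq_of_sub_mem (h : t - s ∈ evenSublattice hB hN) :
    evenNeighbor hB hN t = evenNeighbor hB hN s := by
  refine le_antisymm (sup_le le_sup_left ?_) (sup_le le_sup_left ?_) <;>
    rw [Submodule.span_singleton_le_iff_mem]
  · rw [← sub_add_cancel t s]
    exact add_mem (Submodule.mem_sup_left h) mem_evenNeighbor_self
  · rw [← sub_sub_cancel t s]
    exact sub_mem mem_evenNeighbor_self (Submodule.mem_sup_left h)

theorem evenNeighbor_ne_of_sub_notMem (hU : IsUnimodular B N) (hodd : IsOddLat B N)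
    (hs : s ∈ shadow B N) (hss : ∃ m : ℤ, B s s = 2 * m) (ht : t ∈ shadow B N)
    (hst : t - s ∉ evenSublattice hB hN) :
    evenNeighbor hB hN s ≠ evenNeighbor hB hN t := by
  intro heq
  have hmem : t ∈ evenNeighbor hB hN s := heq ▸ mem_evenNeighbor_self
  rcases (mem_evenNeighbor_iff hU hs hss).mp hmem with h | h
  · exact notMem_of_mem_shadow hN hodd ht h.1
  · exact hst h

theorem IsEvenNeighbor.exists_mem_shadow (hU : IsUnimodular B N) (hodd : IsOddLat B N)
    (hE : IsEvenNeighbor B N E) : ∃ t ∈ shadow B N, E = evenNeighbor hB hN t := by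
  obtain ⟨-, hEU, heven, hNE, hEN⟩ := hE
  have hinf : N ⊓ E = evenSublattice hB hN :=
    hNE.eq_of_le (indexTwo_evenSublattice hodd) fun x hx ↦ ⟨hx.1, heven x hx.2⟩
  obtain ⟨t, htE, htN, -⟩ := hEN.2
  have htdual : t ∈ dualLattice B (evenSublattice hB hN) := fun y hy ↦
    hEU.le htE y (hinf.ge hy).2
  refine ⟨t, (mem_or_mem_shadow_of_mem_dual_evenSublattice hU htdual).resolve_left
    fun h ↦ htN ⟨h, htE⟩, ?_⟩
  rw [evenNeighbor, ← hinf]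
  exact hEN.eq_sup_span_singleton htE htN

theorem stmt13_general (hB : IsPosDefSymm B) (hL : IsIntegralLattice B N)
    (hU : IsUnimodular B N) (hodd : IsOddLat B N) (hrank : 8 ∣ Module.finrank ℚ V) :
    ∃ E₁ E₂ : Submodule ℤ V, E₁ ≠ E₂ ∧
      IsEvenNeighbor B N E₁ ∧ IsEvenNeighbor B N E₂ ∧
      (∀ E : Submodule ℤ V, IsEvenNeighbor B N E → E = E₁ ∨ E = E₂) ∧
      evenSet B N ⊆ (E₁ : Set V) ∧ evenSet B N ⊆ (E₂ : Set V) ∧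
      ∃ a ∈ N, a ∉ evenSet B N ∧ ∀ x ∈ N, x ∈ evenSet B N ∨ x - a ∈ evenSet B N := by
  have hN := hL.integral
  have hD : IndexTwo (evenSublattice hB.1 hN) N := indexTwo_evenSublattice hodd
  have heven (t) (ht : t ∈ shadow B N) : ∃ m : ℤ, B t t = 2 * m :=
    exists_norm_eq_two_mul_of_eight_dvd_finrank hB hL hU hrank ht
  obtain ⟨s, hs⟩ := shadow_nonempty hB hL
  obtain ⟨v, hv, hvD, hcosets⟩ := hD.2
  have hsv : s + v ∈ shadow B N := add_mem_shadow hN hs hv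
  refine ⟨evenNeighbor hB.1 hN s, evenNeighbor hB.1 hN (s + v),
    evenNeighbor_ne_of_sub_notMem hU hodd hs (heven s hs) hsv (by rwa [add_sub_cancel_left]),
    isEvenNeighbor_evenNeighbor hL hU hodd hs (heven s hs),
    isEvenNeighbor_evenNeighbor hL hU hodd hsv (heven _ hsv), fun E hE ↦ ?_,
    fun x hx ↦ Submodule.mem_sup_left hx, fun x hx ↦ Submodule.mem_sup_left hx,
    v, hv, hvD, hcosets⟩
  obtain ⟨t, ht, rfl⟩ := hE.exists_mem_shadow (hB := hB.1) (hN := hN) hU hodd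
  refine (hcosets (t - s) (sub_mem_of_mem_shadow hU hs ht)).imp evenNeighbor_eq_of_sub_mem
    fun h ↦ evenNeighbor_eq_of_sub_mem ?_
  rwa [← sub_sub]

end EvenNeighbors

/-- Every odd Niemeier lattice `N` has exactly two even neighbors, both of which
contain the even sublattice `N₀ = {x ∈ N : (x,x) even}`, which has index 2 in `N`. -/
theorem stmt13 {V : Type*} [AddCommGroup V] [Module ℚ V]
    (B : V →ₗ[ℚ] V →ₗ[ℚ] ℚ) (hB : IsPosDefSymm B)
    (N : Submodule ℤ V) (hN : IsOddNiemeier B N) :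
    ∃ E₁ E₂ : Submodule ℤ V, E₁ ≠ E₂ ∧
      IsEvenNeighbor B N E₁ ∧ IsEvenNeighbor B N E₂ ∧
      (∀ E : Submodule ℤ V, IsEvenNeighbor B N E → E = E₁ ∨ E = E₂) ∧
      evenSet B N ⊆ (E₁ : Set V) ∧ evenSet B N ⊆ (E₂ : Set V) ∧
      ∃ a ∈ N, a ∉ evenSet B N ∧ ∀ x ∈ N, x ∈ evenSet B N ∨ x - a ∈ evenSet B N := by
  obtain ⟨hL, hU, hodd, hrank⟩ := hN
  exact stmt13_general hB hL hU hodd ⟨3, hrank⟩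

end Niemeier
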